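/- With the setup of the map T ↦ c(T) defined by c_i(T) = λ_i(T) + μ_i(T) + ν_i(T) on spanning trees of a permutation graph G_π with sink s, this map is a bijection from the set of spanning trees of G_π to the set of recurrent configurations Rec_s(G_π). -/

import Mathlib

open Finset
open scoped Classical

def permGraph {n : ℕ} (π : Equiv.Perm (Fin n)) : SimpleGraph (Fin n) :=
  SimpleGraph.fromRel (fun i j => i < j ∧ π.symm j < π.symm i)

def IsIndecomposable {n : ℕ} (π : Equiv.Perm (Fin n)) : Prop :=
  ∀ k : ℕ, 0 < k → k < n → ¬ (∀ i : Fin n, (i : ℕ) < k → ((π i : ℕ) < k))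

noncomputable def topple {n : ℕ} (G : SimpleGraph (Fin n)) (c : Fin n → ℕ) (i : Fin n) :
    Fin n → ℕ :=
  fun j => if j = i then c j - G.degree i else c j + (if G.Adj i j then 1 else 0)

noncomputable def toppleList {n : ℕ} (G : SimpleGraph (Fin n)) (c : Fin n → ℕ) :
    List (Fin n) → (Fin n → ℕ)
  | [] => c
  | i :: l => toppleList G (topple G c i) l

def ValidTopplings {n : ℕ} (G : SimpleGraph (Fin n)) (c : Fin n → ℕ) :
    List (Fin n) → Prop
  | [] => True
  | i :: l => G.degree i ≤ c i ∧ ValidTopplings G (topple G c i) l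

def IsRecurrent {n : ℕ} (G : SimpleGraph (Fin n)) (s : Fin n) (c : Fin n → ℕ) : Prop :=
  c s = G.degree s ∧ (∀ i, i ≠ s → c i < G.degree i) ∧
    ∃ l : List (Fin n), l.head? = some s ∧ l.Nodup ∧ (∀ v, v ∈ l) ∧
      ValidTopplings G c l ∧ toppleList G c l = c

/-- `λ i`: number of neighbors of `i` in `G` whose height in `T` (distance to the
root `s`) is strictly greater than that of `i`. -/
noncomputable def lamStat {n : ℕ} (G T : SimpleGraph (Fin n)) (s i : Fin n) : ℕ :=
  (Finset.univ.filter fun j => G.Adj i j ∧ T.dist s i < T.dist s j).card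

/-- `μ i`: number of neighbors of `i` in `G` at the same height in `T` as `i`. -/
noncomputable def muStat {n : ℕ} (G T : SimpleGraph (Fin n)) (s i : Fin n) : ℕ :=
  (Finset.univ.filter fun j => G.Adj i j ∧ T.dist s j = T.dist s i).card

/-- `ν i`: number of neighbors `j` of `i` in `G` at height `h(i) - 1` in `T` with
`j < p(i)`, where `p(i)` is the parent of `i` in `T` rooted at `s` (characterized as
the unique `T`-neighbor `q` of `i` at height `h(i) - 1`). -/
noncomputable def nuStat {n : ℕ} (G T : SimpleGraph (Fin n)) (s i : Fin n) : ℕ :=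
  (Finset.univ.filter fun j => G.Adj i j ∧ T.dist s j + 1 = T.dist s i ∧
    ∃ q : Fin n, T.Adj i q ∧ T.dist s q + 1 = T.dist s i ∧ j < q).card

/-- The configuration associated with a spanning tree `T` of `G` rooted at `s`. -/
noncomputable def treeConfig {n : ℕ} (G T : SimpleGraph (Fin n)) (s : Fin n) :
    Fin n → ℕ :=
  fun i => lamStat G T s i + muStat G T s i + nuStat G T s i

/-!
Burn the vertices in rounds, each time toppling simultaneously all unstable vertices that have not
toppled yet. A configuration `c` with `c s = deg s` that is stable elsewhere is recurrent precisely
when every vertex burns, and its burning time `h` is determined by `c`. Order the vertices by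
increasing `h`, and by decreasing label within a round. A vertex `i ≠ s` becomes unstable as soon
as `deg i - c i` of its neighbours have toppled; let `p i` be the last of these in this order, so
that `h i = h (p i) + 1` and `c i` is the number of neighbours of `i` after `p i`. The map `p` is
the parent map of a spanning tree with height function `h`, and the neighbours of `i` after `p i`
are exactly those counted by `λ i`, `μ i` and `ν i`. Hence `c ↦ p` inverts `T ↦ c(T)`.
-/

section BurningTime

variable {V : Type*} {G : SimpleGraph V} [G.LocallyFinite] {c h h' f : V → ℕ}

/-- The burning time of a configuration: `h i` is the round in which `i` topples when, in each
round, all vertices that are unstable and have not toppled before are toppled simultaneously.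
After the rounds `< k`, a vertex `i` that has not toppled carries
`c i + #{j ∈ G.neighborFinset i | h j < k}` grains. -/
def IsBurningTime (G : SimpleGraph V) [G.LocallyFinite] (c h : V → ℕ) : Prop :=
  ∀ i k, h i ≤ k ↔ G.degree i ≤ c i + #{j ∈ G.neighborFinset i | h j < k}

lemma IsBurningTime.unique (hh : IsBurningTime G c h) (hh' : IsBurningTime G c h') : h = h' := by
  have lt_iff_lt (k : ℕ) : ∀ i, h i < k ↔ h' i < k := by
    induction k with
    | zero => simp
    | succ k ih => simp only [Nat.lt_succ_iff, hh _ k, hh' _ k, ih, implies_true]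
  exact funext fun i => eq_of_forall_gt_iff fun k => lt_iff_lt k i

lemma IsBurningTime.eq_zero_iff (hh : IsBurningTime G c h) {i : V} :
    h i = 0 ↔ G.degree i ≤ c i := by
  simpa using hh i 0

/-- The set of vertices that topple in the rounds before round `k` of the simultaneous toppling
described in `IsBurningTime`. -/
def burntBefore (G : SimpleGraph V) [G.LocallyFinite] (c : V → ℕ) : ℕ → Set V
  | 0 => ∅
  | k + 1 => {i | G.degree i ≤ c i + #{j ∈ G.neighborFinset i | j ∈ burntBefore G c k}}

lemma mem_burntBefore_succ {i : V} {k : ℕ} : i ∈ burntBefore G c (k + 1) ↔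
    G.degree i ≤ c i + #{j ∈ G.neighborFinset i | j ∈ burntBefore G c k} :=
  Iff.rfl

lemma burntBefore_mono : Monotone (burntBefore G c) := by
  refine monotone_nat_of_le_succ fun k => ?_
  induction k with
  | zero => exact Set.empty_subset _
  | succ k ih =>
    intro i hi
    refine mem_burntBefore_succ.2 ((mem_burntBefore_succ.1 hi).trans ?_)
    gcongr

lemma exists_isBurningTime
    (hf : ∀ i, G.degree i ≤ c i + #{j ∈ G.neighborFinset i | f j < f i}) :
    ∃ h, IsBurningTime G c h := by
  have mem_burntBefore (k : ℕ) : ∀ i, f i < k → i ∈ burntBefore G c k := by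
    induction k with
    | zero => simp
    | succ k ih =>
      intro i hi
      refine mem_burntBefore_succ.2 ((hf i).trans ?_)
      gcongr with j
      exact fun hj => ih j (by lia)
  have burns (i : V) : ∃ k, i ∈ burntBefore G c (k + 1) :=
    ⟨f i, mem_burntBefore _ i (Nat.lt_succ_self _)⟩
  let h (i : V) : ℕ := Nat.find (burns i)
  have le_iff (i : V) (k : ℕ) : h i ≤ k ↔ i ∈ burntBefore G c (k + 1) :=
    ⟨fun hk => burntBefore_mono (by lia) (Nat.find_spec (burns i)), Nat.find_min' (burns i)⟩
  have lt_iff (i : V) (k : ℕ) : h i < k ↔ i ∈ burntBefore G c k := by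
    cases k with
    | zero => simp [burntBefore]
    | succ k => rw [Nat.lt_succ_iff, le_iff]
  exact ⟨h, fun i k => by simp only [le_iff, lt_iff, mem_burntBefore_succ]⟩

end BurningTime

section Recurrent

variable {n : ℕ} {G : SimpleGraph (Fin n)} {c : Fin n → ℕ} {l : List (Fin n)}

lemma toppleList_add_count_mul_degree (hl : ValidTopplings G c l) (j : Fin n) :
    toppleList G c l j + l.count j * G.degree j = c j + l.countP (G.Adj j ·) := by
  induction l generalizing c with
  | nil => simp [toppleList]
  | cons i l ih =>
    obtain ⟨hi, hl⟩ := hl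
    have ih := ih hl
    by_cases hji : j = i
    · subst hji
      simp only [topple, if_true] at ih
      simp only [toppleList, List.count_cons_self, add_mul, one_mul, SimpleGraph.irrefl,
        decide_false, Bool.false_eq_true, not_false_eq_true, List.countP_cons_of_neg]
      lia
    · simp only [topple, hji, if_false] at ih
      simp only [toppleList, List.count_cons_of_ne (Ne.symm hji), List.countP_cons,
        G.adj_comm j i, decide_eq_true_eq]
      lia

lemma toppleList_eq_self (hnodup : l.Nodup) (hmem : ∀ v, v ∈ l) (hl : ValidTopplings G c l) :
    toppleList G c l = c := by
  funext j
  have count_eq : l.count j = 1 := List.count_eq_one_of_mem hnodup (hmem j)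
  have countP_eq : l.countP (G.Adj j ·) = G.degree j := by
    rw [List.countP_eq_length_filter, ← List.toFinset_card_of_nodup (hnodup.filter _),
      ← G.card_neighborFinset_eq_degree]
    congr 1
    ext k
    simp [hmem]
  have := toppleList_add_count_mul_degree hl j
  lia

lemma validTopplings_iff (hnodup : l.Nodup) :
    ValidTopplings G c l ↔
      ∀ j ∈ l, G.degree j ≤ c j + #{k ∈ G.neighborFinset j | l.idxOf k < l.idxOf j} := by
  induction l generalizing c with
  | nil => simp [ValidTopplings]
  | cons i l ih =>
    obtain ⟨hil, hnodup⟩ := List.nodup_cons.1 hnodup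
    have topple_add (j : Fin n) (hj : j ∈ l) :
        topple G c i j + #{k ∈ G.neighborFinset j | l.idxOf k < l.idxOf j} =
          c j + #{k ∈ G.neighborFinset j | (i :: l).idxOf k < (i :: l).idxOf j} := by
      have hij : i ≠ j := fun hij => hil (hij ▸ hj)
      have hi : ¬ l.idxOf i < l.idxOf j := by
        rw [List.idxOf_of_notMem hil]
        exact List.idxOf_le_length.not_gt
      have idxOf_lt (k : Fin n) : (i :: l).idxOf k < (i :: l).idxOf j ↔
          k = i ∨ l.idxOf k < l.idxOf j := by
        by_cases hki : k = i
        · simp [hki, List.idxOf_cons_ne _ hij]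
        · simp [hki, List.idxOf_cons_ne _ hij, List.idxOf_cons_ne _ (Ne.symm hki)]
      simp only [idxOf_lt, filter_or, filter_eq', SimpleGraph.mem_neighborFinset, topple,
        hij.symm, if_false, G.adj_comm j i]
      split_ifs with hadj
      · rw [card_union_of_disjoint (by simp [hi]), card_singleton, add_assoc]
      · simp
    rw [ValidTopplings, ih hnodup, List.forall_mem_cons]
    refine and_congr (by simp) (forall₂_congr fun j hj => ?_)
    rw [topple_add j hj]

lemma exists_validTopplings_iff :
    (∃ l : List (Fin n), l.Nodup ∧ (∀ v, v ∈ l) ∧ ValidTopplings G c l) ↔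
      ∃ f : Fin n → ℕ, ∀ i, G.degree i ≤ c i + #{j ∈ G.neighborFinset i | f j < f i} := by
  constructor
  · rintro ⟨l, hnodup, hmem, hl⟩
    exact ⟨l.idxOf, fun i => (validTopplings_iff hnodup).1 hl i (hmem i)⟩
  · rintro ⟨f, hf⟩
    let σ := Tuple.sort f
    have hnodup : (List.ofFn σ).Nodup := List.nodup_ofFn.2 σ.injective
    have idxOf_eq (a : Fin n) : (List.ofFn σ).idxOf (σ a) = a := by
      simpa using hnodup.idxOf_getElem a (by simp)
    refine ⟨List.ofFn σ, hnodup, by simp [List.mem_ofFn, σ.surjective _],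
      (validTopplings_iff hnodup).2 fun i _ => (hf i).trans ?_⟩
    gcongr _ + #{j ∈ _ | ?_} with j
    obtain ⟨a, rfl⟩ := σ.surjective i
    obtain ⟨b, rfl⟩ := σ.surjective j
    rw [idxOf_eq, idxOf_eq]
    exact fun hlt => (Tuple.monotone_sort f).reflect_lt hlt

lemma isRecurrent_iff {s : Fin n} : IsRecurrent G s c ↔
    c s = G.degree s ∧ (∀ i, i ≠ s → c i < G.degree i) ∧ ∃ h, IsBurningTime G c h := by
  refine and_congr_right fun _ => and_congr_right fun hstable => ?_
  constructor
  · rintro ⟨l, -, hnodup, hmem, hl, -⟩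
    obtain ⟨f, hf⟩ := exists_validTopplings_iff.1 ⟨l, hnodup, hmem, hl⟩
    exact exists_isBurningTime hf
  · rintro ⟨h, hh⟩
    obtain ⟨l, hnodup, hmem, hl⟩ := exists_validTopplings_iff.2 ⟨h, fun i => (hh i _).1 le_rfl⟩
    refine ⟨l, ?_, hnodup, hmem, hl, toppleList_eq_self hnodup hmem hl⟩
    match l, hmem s, hl with
    | a :: l, _, hl =>
      by_contra hne
      exact (hstable a (by simpa using hne)).not_ge hl.1

end Recurrent

section ParentMap

variable {V : Type*} {T : SimpleGraph V} {s : V} {p : V → V} {h : V → ℕ}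

lemma isAcyclic_of_unique_lower_neighbor {α : Type*} [LinearOrder α] (h : V → α)
    (hne : ∀ ⦃i j⦄, T.Adj i j → h i ≠ h j)
    (huniq : ∀ ⦃i j k⦄, T.Adj i j → T.Adj i k → h j < h i → h k < h i → j = k) :
    T.IsAcyclic := by
  intro v w hw
  obtain ⟨m, hm, hmax⟩ := w.support.toFinset.exists_max_image h ⟨v, by simp⟩
  rw [List.mem_toFinset] at hm
  let w' := w.rotate m hm
  have hw' : w'.IsCycle := hw.rotate hm
  have lower_of_adj {j : V} (hj : j ∈ w'.support) (hadj : T.Adj m j) : h j < h m := by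
    rw [SimpleGraph.Walk.mem_support_rotate_iff] at hj
    exact (hmax j (List.mem_toFinset.2 hj)).lt_of_ne (hne hadj).symm
  have hsnd := w'.adj_snd hw'.not_nil
  have hpen := (w'.adj_penultimate hw'.not_nil).symm
  exact hw'.snd_ne_penultimate (huniq hsnd hpen (lower_of_adj (by simp) hsnd)
    (lower_of_adj (by simp) hpen))

/-- `p` is the parent map of a tree with root `s` and height function `h`. The root is its own
parent, so that a tree determines the whole function `p`. -/
structure IsParentMap (s : V) (p : V → V) (h : V → ℕ) : Prop where
  parent_root : p s = s
  height_root : h s = 0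
  height_parent : ∀ i, i ≠ s → h (p i) + 1 = h i

/-- The graph whose edges join each vertex to its parent under `p`. The loop at a vertex that is
its own parent is dropped. -/
def parentGraph (p : V → V) : SimpleGraph V :=
  SimpleGraph.fromRel fun i j => p i = j

lemma parentGraph_le_iff : parentGraph p ≤ T ↔ ∀ i, i ≠ p i → T.Adj i (p i) := by
  constructor
  · exact fun hle i hi => hle ((SimpleGraph.fromRel_adj _ _ _).2 ⟨hi, .inl rfl⟩)
  · rintro hle i j ⟨hij, rfl | rfl⟩
    · exact hle i hij
    · exact (hle j hij.symm).symm

lemma exists_map_fixing_root {P : V → V → Prop} (hP : ∀ i, i ≠ s → ∃ q, P i q) :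
    ∃ p : V → V, p s = s ∧ ∀ i, i ≠ s → P i (p i) := by
  have : Nonempty V := ⟨s⟩
  choose! p hp using hP
  exact ⟨Function.update p s s, by simp, fun i hi => by simpa [hi] using hp i hi⟩

namespace IsParentMap

lemma height_eq_zero_iff (hp : IsParentMap s p h) {i : V} : h i = 0 ↔ i = s := by
  refine ⟨fun hi => ?_, fun hi => hi ▸ hp.height_root⟩
  by_contra hne
  have := hp.height_parent i hne
  lia

lemma ne_parent (hp : IsParentMap s p h) {i : V} (hi : i ≠ s) : i ≠ p i := fun heq => by
  have := hp.height_parent i hi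
  rw [← heq] at this
  lia

lemma adj_iff (hp : IsParentMap s p h) {i j : V} :
    (parentGraph p).Adj i j ↔ (i ≠ s ∧ p i = j) ∨ (j ≠ s ∧ p j = i) := by
  rw [parentGraph, SimpleGraph.fromRel_adj]
  constructor
  · rintro ⟨hij, rfl | rfl⟩
    · exact .inl ⟨fun hi => hij (by rw [hi, hp.parent_root]), rfl⟩
    · exact .inr ⟨fun hj => hij (by rw [hj, hp.parent_root]), rfl⟩
  · rintro (⟨hi, rfl⟩ | ⟨hj, rfl⟩)
    · exact ⟨hp.ne_parent hi, .inl rfl⟩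
    · exact ⟨(hp.ne_parent hj).symm, .inr rfl⟩

lemma adj_and_height_iff (hp : IsParentMap s p h) {i q : V} (hi : i ≠ s) :
    (parentGraph p).Adj i q ∧ h q + 1 = h i ↔ q = p i := by
  constructor
  · rintro ⟨hadj, hq⟩
    rcases hp.adj_iff.1 hadj with ⟨-, rfl⟩ | ⟨hqs, rfl⟩
    · rfl
    · have := hp.height_parent q hqs
      lia
  · rintro rfl
    exact ⟨hp.adj_iff.2 (.inl ⟨hi, rfl⟩), hp.height_parent i hi⟩

lemma exists_walk_length_eq (hp : IsParentMap s p h) (i : V) :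
    ∃ w : (parentGraph p).Walk s i, w.length = h i := by
  induction hk : h i generalizing i with
  | zero =>
    obtain rfl := hp.height_eq_zero_iff.1 hk
    exact ⟨.nil, rfl⟩
  | succ k ih =>
    have hi : i ≠ s := fun hi => by simp [hp.height_eq_zero_iff.2 hi] at hk
    have height_eq := hp.height_parent i hi
    obtain ⟨w, hw⟩ := ih (p i) (by lia)
    exact ⟨w.concat (hp.adj_iff.2 (.inr ⟨hi, rfl⟩)), by simp [hw]⟩

lemma height_le_add_length (hp : IsParentMap s p h) {i j : V} (w : (parentGraph p).Walk i j) :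
    h j ≤ h i + w.length := by
  induction w with
  | nil => simp
  | cons hadj w ih =>
    rw [SimpleGraph.Walk.length_cons]
    rcases hp.adj_iff.1 hadj with ⟨hi, rfl⟩ | ⟨hj, rfl⟩
    · have := hp.height_parent _ hi
      lia
    · have := hp.height_parent _ hj
      lia

lemma connected (hp : IsParentMap s p h) : (parentGraph p).Connected :=
  (SimpleGraph.connected_iff_exists_forall_reachable _).2
    ⟨s, fun i => (hp.exists_walk_length_eq i).choose.reachable⟩

lemma dist_eq (hp : IsParentMap s p h) : (parentGraph p).dist s = h := by
  funext i
  obtain ⟨w, hw⟩ := hp.exists_walk_length_eq i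
  obtain ⟨w', hw'⟩ := hp.connected.exists_walk_length_eq_dist s i
  refine le_antisymm (hw ▸ SimpleGraph.dist_le w) ?_
  simpa [hp.height_root, hw'] using hp.height_le_add_length w'

lemma isTree (hp : IsParentMap s p h) : (parentGraph p).IsTree := by
  have ne_of_adj ⦃i j : V⦄ (hadj : (parentGraph p).Adj i j) : h i ≠ h j := by
    rcases hp.adj_iff.1 hadj with ⟨hi, rfl⟩ | ⟨hj, rfl⟩
    · have := hp.height_parent i hi
      lia
    · have := hp.height_parent j hj
      lia
  have eq_parent ⦃i j : V⦄ (hadj : (parentGraph p).Adj i j) (hlt : h j < h i) : p i = j := by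
    rcases hp.adj_iff.1 hadj with ⟨-, hj⟩ | ⟨hj, rfl⟩
    · exact hj
    · have := hp.height_parent j hj
      lia
  exact ⟨hp.connected, isAcyclic_of_unique_lower_neighbor h ne_of_adj
    fun i j k hj hk hji hki => (eq_parent hj hji).symm.trans (eq_parent hk hki)⟩

end IsParentMap

lemma exists_adj_dist_add_one_eq (hT : T.IsTree) {i : V} (hi : i ≠ s) :
    ∃ q, T.Adj i q ∧ T.dist s q + 1 = T.dist s i := by
  obtain ⟨w, hw⟩ := hT.connected.exists_walk_length_eq_dist i s
  cases w with
  | nil => exact absurd rfl hi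
  | @cons _ q _ hadj w =>
    refine ⟨q, hadj, ?_⟩
    have hle := SimpleGraph.dist_le w
    rw [SimpleGraph.Walk.length_cons] at hw
    rw [T.dist_comm] at hw hle
    rcases hT.dist_eq_dist_add_one_of_adj s hadj with hd | hd <;> lia

lemma eq_of_adj_of_dist_add_one_eq (hT : T.IsTree) {i q q' : V} (hq : T.Adj i q)
    (hq' : T.Adj i q') (hd : T.dist s q + 1 = T.dist s i) (hd' : T.dist s q' + 1 = T.dist s i) :
    q = q' := by
  have exists_path {q : V} (hq : T.Adj i q) (hd : T.dist s q + 1 = T.dist s i) :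
      ∃ w : T.Path i s, w.1.snd = q := by
    obtain ⟨w, hw⟩ := hT.connected.exists_walk_length_eq_dist q s
    refine ⟨⟨w.cons hq, SimpleGraph.Walk.isPath_of_length_eq_dist _ ?_⟩, by simp⟩
    rw [SimpleGraph.Walk.length_cons, hw, T.dist_comm, hd, T.dist_comm]
  obtain ⟨w, rfl⟩ := exists_path hq hd
  obtain ⟨w', rfl⟩ := exists_path hq' hd'
  rw [(hT.isAcyclic.subsingleton_path i s).elim w w']

lemma exists_isParentMap (hT : T.IsTree) (s : V) :
    ∃ p h, IsParentMap s p h ∧ T = parentGraph p := by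
  obtain ⟨p, hps, hp⟩ := exists_map_fixing_root fun i (hi : i ≠ s) =>
    exists_adj_dist_add_one_eq hT hi
  have hparent : IsParentMap s p (T.dist s) :=
    ⟨hps, SimpleGraph.dist_self, fun i hi => (hp i hi).2⟩
  have parent_eq {i j : V} (hadj : T.Adj i j) (hd : T.dist s i = T.dist s j + 1) : p i = j := by
    have hi : i ≠ s := fun hi => by simp [hi] at hd
    exact eq_of_adj_of_dist_add_one_eq hT (hp i hi).1 hadj (hp i hi).2 hd.symm
  refine ⟨p, T.dist s, hparent,
    le_antisymm (fun i j hadj => ?_) (parentGraph_le_iff.2 fun i hi => ?_)⟩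
  · refine (SimpleGraph.fromRel_adj _ _ _).2 ⟨hadj.ne, ?_⟩
    exact (hT.dist_eq_dist_add_one_of_adj s hadj).imp (parent_eq hadj) (parent_eq hadj.symm)
  · exact (hp i fun his => hi (by rw [his, hps])).1

end ParentMap

section CardFilterLT

variable {ι α : Type*} [LinearOrder α] {key : ι → α} {L : Finset ι}

lemma injOn_card_filter_lt (hkey : Set.InjOn key L) :
    Set.InjOn (fun a => #{x ∈ L | key a < key x}) L := by
  have card_lt {a b : ι} (hb : b ∈ L) (hab : key a < key b) :
      #{x ∈ L | key b < key x} < #{x ∈ L | key a < key x} := by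
    refine card_lt_card ((ssubset_iff_of_subset ?_).2 ⟨b, by simp [hb, hab], by simp⟩)
    exact fun x => by simpa using fun hx hbx => ⟨hx, hab.trans hbx⟩
  intro a ha b hb heq
  rcases lt_trichotomy (key a) (key b) with hab | hab | hab
  · exact absurd heq (card_lt hb hab).ne'
  · exact hkey ha hb hab
  · exact absurd heq (card_lt ha hab).ne

lemma exists_card_filter_lt_eq (hkey : Set.InjOn key L) {r : ℕ} (hr : r < #L) :
    ∃ a ∈ L, #{x ∈ L | key a < key x} = r := by
  have mapsTo : Set.MapsTo (fun a => #{x ∈ L | key a < key x}) L (range #L) := fun a ha => by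
    simpa using card_lt_card (filter_ssubset.2 ⟨a, ha, lt_irrefl (key a)⟩)
  exact surjOn_of_injOn_of_card_le _ mapsTo (injOn_card_filter_lt hkey) (by simp)
    (by simpa using hr)

end CardFilterLT

section BurningKey

variable {V : Type*} {G : SimpleGraph V} [G.LocallyFinite] {s : V} {p : V → V} {c h : V → ℕ}

/-- The order in which the vertices burn when the burning times are `h`: by increasing burning
time, and by decreasing label within a round. -/
def burningKey (h : V → ℕ) (i : V) : ℕ ×ₗ Vᵒᵈ :=
  toLex (h i, OrderDual.toDual i)

lemma burningKey_injective (h : V → ℕ) : Function.Injective (burningKey h) :=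
  fun _ _ heq => congrArg (fun x : ℕ ×ₗ Vᵒᵈ => OrderDual.ofDual (ofLex x).2) heq

variable [LinearOrder V]

lemma burningKey_lt_iff {i j : V} :
    burningKey h i < burningKey h j ↔ h i < h j ∨ h i = h j ∧ j < i :=
  Prod.Lex.toLex_lt_toLex

/-- When the neighbours of `i` are burnt one at a time in the order of `burningKey h`, the
hypothesis says that `i` becomes unstable exactly when `q` burns. -/
lemma degree_le_add_card_iff {i q k} (hq : q ∈ G.neighborFinset i)
    (hc : #{j ∈ G.neighborFinset i | burningKey h q < burningKey h j} = c i) :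
    G.degree i ≤ c i + #{j ∈ G.neighborFinset i | h j < k} ↔ h q < k := by
  have degree_eq :
      c i + #{j ∈ G.neighborFinset i | ¬ burningKey h q < burningKey h j} = G.degree i := by
    rw [← hc, card_filter_add_card_filter_not, G.card_neighborFinset_eq_degree]
  rw [← degree_eq, add_le_add_iff_left]
  constructor
  · refine not_imp_not.1 fun hk => not_le.2 (card_lt_card ?_)
    refine (ssubset_iff_of_subset fun j => ?_).2 ⟨q, ?_⟩
    · simp only [mem_filter, burningKey_lt_iff]
      exact fun hj => ⟨hj.1, by lia⟩
    · simpa [hk] using hq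
  · intro hk
    gcongr with j
    simp only [burningKey_lt_iff]
    lia

lemma IsParentMap.isBurningTime (hp : IsParentMap s p h) (hs : G.degree s ≤ c s)
    (hadj : ∀ i, i ≠ s → G.Adj i (p i))
    (hc : ∀ i, i ≠ s → #{j ∈ G.neighborFinset i | burningKey h (p i) < burningKey h j} = c i) :
    IsBurningTime G c h := by
  intro i k
  rcases eq_or_ne i s with rfl | hi
  · simp [hp.height_root, hs.trans (Nat.le_add_right _ _)]
  · rw [degree_le_add_card_iff (by simpa using hadj i hi) (hc i hi), ← hp.height_parent i hi,
      Nat.succ_le_iff]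

lemma IsBurningTime.exists_isParentMap (hh : IsBurningTime G c h) (hs : G.degree s ≤ c s)
    (hstable : ∀ i, i ≠ s → c i < G.degree i) :
    ∃ p, IsParentMap s p h ∧ ∀ i, i ≠ s → G.Adj i (p i) ∧
      #{j ∈ G.neighborFinset i | burningKey h (p i) < burningKey h j} = c i := by
  obtain ⟨p, hps, hp⟩ := exists_map_fixing_root fun i (hi : i ≠ s) =>
    exists_card_filter_lt_eq (burningKey_injective h).injOn
      ((hstable i hi).trans_eq (G.card_neighborFinset_eq_degree i).symm)
  refine ⟨p, ⟨hps, hh.eq_zero_iff.2 hs, fun i hi => ?_⟩, fun i hi =>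
    ⟨by simpa using (hp i hi).1, (hp i hi).2⟩⟩
  refine eq_of_forall_ge_iff fun k => ?_
  rw [hh i k, degree_le_add_card_iff (hp i hi).1 (hp i hi).2, Nat.succ_le_iff]

end BurningKey

section TreeConfig

variable {n : ℕ} {G T : SimpleGraph (Fin n)} {s : Fin n} {p : Fin n → Fin n} {c h : Fin n → ℕ}

lemma treeConfig_root (hT : T.Connected) : treeConfig G T s s = G.degree s := by
  have lamStat_eq : lamStat G T s s = G.degree s := by
    rw [lamStat, ← G.card_neighborFinset_eq_degree, SimpleGraph.neighborFinset_eq_filter]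
    congr 1
    refine filter_congr fun j _ => and_iff_left_of_imp fun hj => ?_
    simpa using hT.pos_dist_of_ne hj.ne
  have muStat_eq : muStat G T s s = 0 := by
    simp only [muStat, SimpleGraph.dist_self, hT.dist_eq_zero_iff]
    simpa using fun j hj => hj.ne
  have nuStat_eq : nuStat G T s s = 0 := by simp [nuStat]
  rw [treeConfig, lamStat_eq, muStat_eq, nuStat_eq, add_zero, add_zero]

lemma IsParentMap.treeConfig_eq (hp : IsParentMap s p h) {i : Fin n} (hi : i ≠ s) :
    treeConfig G (parentGraph p) s i =
      #{j ∈ G.neighborFinset i | burningKey h (p i) < burningKey h j} := by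
  have lt_parent_iff (j : Fin n) : (∃ q, (parentGraph p).Adj i q ∧ h q + 1 = h i ∧ j < q) ↔
      j < p i := by
    simp only [← and_assoc, hp.adj_and_height_iff hi, exists_eq_left]
  have height_eq := hp.height_parent i hi
  simp only [treeConfig, lamStat, muStat, nuStat, hp.dist_eq, lt_parent_iff,
    SimpleGraph.neighborFinset_eq_filter, filter_filter, burningKey_lt_iff, card_filter,
    ← sum_add_distrib]
  refine sum_congr rfl fun j _ => ?_
  by_cases hj : G.Adj i j
  · simp only [hj, true_and]
    split_ifs <;> lia
  · simp [hj]

lemma IsParentMap.isBurningTime_treeConfig (hp : IsParentMap s p h) (hle : parentGraph p ≤ G) :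
    IsBurningTime G (treeConfig G (parentGraph p) s) h :=
  hp.isBurningTime (treeConfig_root hp.connected).ge
    (fun i hi => parentGraph_le_iff.1 hle i (hp.ne_parent hi))
    fun _ hi => (hp.treeConfig_eq hi).symm

lemma IsParentMap.treeConfig_lt_degree (hp : IsParentMap s p h) (hle : parentGraph p ≤ G)
    {i : Fin n} (hi : i ≠ s) : treeConfig G (parentGraph p) s i < G.degree i := by
  rw [← not_le, ← (hp.isBurningTime_treeConfig hle).eq_zero_iff, hp.height_eq_zero_iff]
  exact hi

lemma isRecurrent_treeConfig (hle : T ≤ G) (hT : T.IsTree) :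
    IsRecurrent G s (treeConfig G T s) := by
  obtain ⟨p, h, hp, rfl⟩ := exists_isParentMap hT s
  exact isRecurrent_iff.2 ⟨treeConfig_root hT.connected, fun _ => hp.treeConfig_lt_degree hle,
    h, hp.isBurningTime_treeConfig hle⟩

lemma treeConfig_injOn (G : SimpleGraph (Fin n)) (s : Fin n) :
    Set.InjOn (fun T => treeConfig G T s) {T | T ≤ G ∧ T.IsTree} := by
  rintro T ⟨hle, hT⟩ T' ⟨hle', hT'⟩ (heq : treeConfig G T s = treeConfig G T' s)
  obtain ⟨p, h, hp, rfl⟩ := exists_isParentMap hT s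
  obtain ⟨p', h', hp', rfl⟩ := exists_isParentMap hT' s
  obtain rfl : h = h' :=
    (heq ▸ hp.isBurningTime_treeConfig hle).unique (hp'.isBurningTime_treeConfig hle')
  suffices p = p' by rw [this]
  funext i
  rcases eq_or_ne i s with rfl | hi
  · rw [hp.parent_root, hp'.parent_root]
  · refine injOn_card_filter_lt (L := G.neighborFinset i) (burningKey_injective h).injOn ?_ ?_ ?_
    · simpa using parentGraph_le_iff.1 hle i (hp.ne_parent hi)
    · simpa using parentGraph_le_iff.1 hle' i (hp'.ne_parent hi)
    · simp only [← hp.treeConfig_eq hi, ← hp'.treeConfig_eq hi, heq]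

lemma IsRecurrent.exists_treeConfig_eq (hc : IsRecurrent G s c) :
    ∃ T ≤ G, T.IsTree ∧ treeConfig G T s = c := by
  obtain ⟨hs, hstable, h, hh⟩ := isRecurrent_iff.1 hc
  obtain ⟨p, hp, hpc⟩ := hh.exists_isParentMap hs.ge hstable
  have ne_root {i : Fin n} (hi : i ≠ p i) : i ≠ s := fun his => hi (by rw [his, hp.parent_root])
  refine ⟨parentGraph p, parentGraph_le_iff.2 fun i hi => (hpc i (ne_root hi)).1, hp.isTree,
    funext fun i => ?_⟩
  rcases eq_or_ne i s with rfl | hi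
  · rw [treeConfig_root hp.connected, hs]
  · rw [hp.treeConfig_eq hi, (hpc i hi).2]

end TreeConfig

theorem treeConfig_bijOn_general {n : ℕ} (G : SimpleGraph (Fin n)) (s : Fin n) :
    Set.BijOn (fun T : SimpleGraph (Fin n) => treeConfig G T s)
      {T | T ≤ G ∧ T.IsTree} {c | IsRecurrent G s c} := by
  refine ⟨fun T hT => isRecurrent_treeConfig hT.1 hT.2, treeConfig_injOn G s, fun c hc => ?_⟩
  obtain ⟨T, hle, hT, heq⟩ := IsRecurrent.exists_treeConfig_eq hc
  exact ⟨T, ⟨hle, hT⟩, heq⟩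

/-- the map `T ↦ c(T)` is a bijection from the set of spanning trees of
the permutation graph `G_π` onto the set of recurrent configurations `Rec_s(G_π)`. -/
theorem treeConfig_bijOn {n : ℕ} (π : Equiv.Perm (Fin n))
    (hπ : IsIndecomposable π) (s : Fin n) :
    Set.BijOn (fun T : SimpleGraph (Fin n) => treeConfig (permGraph π) T s)
      {T | T ≤ permGraph π ∧ T.IsTree}
      {c | IsRecurrent (permGraph π) s c} :=
  treeConfig_bijOn_general (permGraph π) s
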